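/- arXiv:2301.08474 — 2 statements merged into one kernel-verified Lean document; each statement's English description precedes it below -/
import Mathlib

section
/- For real Gaussian measures P = N(μ₁, σ²) and Q = N(μ₂, σ²) with the same variance σ² > 0, and any order φ > 1, the Rényi moment of the likelihood ratio satisfies ∫ℝ (dP/dQ)^(φ-1) dP = exp((φ-1) · φ · (μ₁-μ₂)²/(2σ²)). -/
open MeasureTheory ProbabilityTheory Real

/-!
For equal variances the quadratic terms of the two Gaussian exponents cancel, so the likelihood
ratio `dP/dQ` is the exponential of an affine function of `x`
(`gaussianReal_eq_withDensity_exp`). Its power `φ - 1` is again of this form, and the moment is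
therefore, up to a constant factor, a value of the moment generating function of `P`.
-/

/-- Change of mean: `N(μ₁, v)` is an exponential tilting of `N(μ₂, v)`. -/
lemma gaussianReal_eq_withDensity_exp (μ₁ μ₂ : ℝ) {v : NNReal} (hv : v ≠ 0) :
    gaussianReal μ₁ v = (gaussianReal μ₂ v).withDensity (fun x ↦ ENNReal.ofReal
      (rexp ((μ₁ - μ₂) / v * x - (μ₁ ^ 2 - μ₂ ^ 2) / (2 * v)))) := by
  have hv' : (v : ℝ) ≠ 0 := by exact_mod_cast hv
  rw [gaussianReal_of_var_ne_zero μ₁ hv, gaussianReal_of_var_ne_zero μ₂ hv,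
    ← withDensity_mul _ (measurable_gaussianPDF μ₂ v) (by fun_prop)]
  congr 1
  ext1 x
  simp only [Pi.mul_apply, gaussianPDF]
  rw [← ENNReal.ofReal_mul (gaussianPDFReal_nonneg _ _ _)]
  simp only [gaussianPDFReal]
  rw [mul_assoc (√_)⁻¹ (rexp _) (rexp _), ← Real.exp_add]
  congr 3
  field_simp
  ring

/-- For real Gaussian measures `P = N(μ₁, σ²)` and `Q = N(μ₂, σ²)` with the same variance
`σ² > 0`, and any order `φ > 1`, the Rényi moment of the likelihood ratio satisfies
`∫ (dP/dQ)^(φ-1) dP = exp((φ-1) · φ · (μ₁-μ₂)² / (2σ²))`. -/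
theorem gaussian_renyi_moment (μ₁ μ₂ : ℝ) (σ : NNReal) (hσ : 0 < σ) (φ : ℝ) (hφ : 1 < φ) :
    ∫ x, (((gaussianReal μ₁ (σ ^ 2)).rnDeriv (gaussianReal μ₂ (σ ^ 2)) x).toReal) ^ (φ - 1)
        ∂(gaussianReal μ₁ (σ ^ 2))
      = Real.exp ((φ - 1) * φ * (μ₁ - μ₂) ^ 2 / (2 * (σ : ℝ) ^ 2)) := by
  have hv : σ ^ 2 ≠ 0 := pow_ne_zero 2 hσ.ne'
  have hσ' : (σ : ℝ) ≠ 0 := by exact_mod_cast hσ.ne'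
  have hP := gaussianReal_eq_withDensity_exp μ₁ μ₂ hv
  have hac : gaussianReal μ₁ (σ ^ 2) ≪ gaussianReal μ₂ (σ ^ 2) := by
    rw [hP]
    exact withDensity_absolutelyContinuous _ _
  have hd : (gaussianReal μ₁ (σ ^ 2)).rnDeriv (gaussianReal μ₂ (σ ^ 2))
      =ᵐ[gaussianReal μ₂ (σ ^ 2)] fun x ↦ ENNReal.ofReal
      (rexp ((μ₁ - μ₂) / (σ ^ 2 : NNReal) * x - (μ₁ ^ 2 - μ₂ ^ 2) / (2 * (σ ^ 2 : NNReal)))) := by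
    rw [hP]
    exact Measure.rnDeriv_withDensity _ (by fun_prop)
  have hint : (fun x ↦
      (((gaussianReal μ₁ (σ ^ 2)).rnDeriv (gaussianReal μ₂ (σ ^ 2)) x).toReal) ^ (φ - 1))
      =ᵐ[gaussianReal μ₁ (σ ^ 2)] fun x ↦
        rexp ((φ - 1) * (μ₁ - μ₂) / (σ : ℝ) ^ 2 * x) *
          rexp (-((φ - 1) * (μ₁ ^ 2 - μ₂ ^ 2) / (2 * (σ : ℝ) ^ 2))) := by
    filter_upwards [hac.ae_le hd] with x hx
    rw [hx, ENNReal.toReal_ofReal (Real.exp_pos _).le, ← Real.exp_mul, ← Real.exp_add]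
    congr 1
    push_cast
    ring
  have hmgf := congrFun (mgf_fun_id_gaussianReal (μ := μ₁) (v := σ ^ 2))
    ((φ - 1) * (μ₁ - μ₂) / (σ : ℝ) ^ 2)
  rw [mgf] at hmgf
  rw [integral_congr_ae hint, integral_mul_const, hmgf, ← Real.exp_add]
  congr 1
  push_cast
  field_simp
  ring
end

section
/- (Gaussian mechanism satisfies zCDP, one-dimensional form of Lemma 1.) Let σ > 0 and Δ_f ≥ 0. For any two real numbers μ₁, μ₂ with |μ₁ - μ₂| ≤ Δ_f, letting P = N(μ₁, σ²) and Q = N(μ₂, σ²), for every φ > 1 one has ∫ℝ (dP/dQ)^(φ-1) dP ≤ exp((φ-1) · (Δ_f²/(2σ²)) · φ). That is, the Gaussian mechanism with noise scale σ applied to a query of sensitivity Δ_f satisfies (Δ_f²/(2σ²))-zCDP. -/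
open MeasureTheory ProbabilityTheory Real

/-! The likelihood ratio of two Gaussians with common variance is the exponential of an affine
function of `x` (`toReal_rnDeriv_gaussianReal_gaussianReal`), so its `(φ - 1)`-th moment under the
first one is, up to a constant factor, a value of the Gaussian moment generating function.
The moment equals
`exp ((φ - 1) * ((μ₁ - μ₂) ^ 2 / (2 * σ ^ 2)) * φ)`, which is monotone in `|μ₁ - μ₂|`. -/

lemma toReal_rnDeriv_gaussianReal_gaussianReal (μ₁ μ₂ : ℝ) {v : NNReal} (hv : v ≠ 0) :
    ∀ᵐ x ∂(gaussianReal μ₁ v), ((gaussianReal μ₁ v).rnDeriv (gaussianReal μ₂ v) x).toReal =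
      Real.exp ((μ₁ - μ₂) / v * x + (μ₂ ^ 2 - μ₁ ^ 2) / (2 * v)) := by
  have hv' : (v : ℝ) ≠ 0 := by exact_mod_cast hv
  have hac₁ := gaussianReal_absolutelyContinuous μ₁ hv
  have hac₂ := gaussianReal_absolutelyContinuous μ₂ hv
  have hac : gaussianReal μ₁ v ≪ gaussianReal μ₂ v :=
    hac₁.trans (gaussianReal_absolutelyContinuous' μ₂ hv)
  filter_upwards [hac (Measure.rnDeriv_eq_div hac₁ hac₂),
    hac₁ (rnDeriv_gaussianReal μ₁ v), hac₁ (rnDeriv_gaussianReal μ₂ v)] with x h h₁ h₂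
  have hsqrt : (√(2 * π * v))⁻¹ ≠ 0 := by
    have : (0 : ℝ) < v := by positivity
    positivity
  rw [h, h₁, h₂, ENNReal.toReal_div, toReal_gaussianPDF, toReal_gaussianPDF, gaussianPDFReal,
    gaussianPDFReal, mul_div_mul_left _ _ hsqrt, ← Real.exp_sub]
  congr 1
  field_simp
  ring

/-- Gaussian mechanism satisfies zCDP (one-dimensional form): for `σ > 0`, `Δf ≥ 0` and
`|μ₁ - μ₂| ≤ Δf`, with `P = N(μ₁, σ²)`, `Q = N(μ₂, σ²)`, for every `φ > 1`,
`∫ (dP/dQ)^(φ-1) dP ≤ exp((φ-1) · (Δf²/(2σ²)) · φ)`. -/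
theorem gaussian_mechanism_zCDP (σ : NNReal) (hσ : 0 < σ) (Δf : ℝ) (hΔf : 0 ≤ Δf)
    (μ₁ μ₂ : ℝ) (hadj : |μ₁ - μ₂| ≤ Δf) (φ : ℝ) (hφ : 1 < φ) :
    ∫ x, (((gaussianReal μ₁ (σ ^ 2)).rnDeriv (gaussianReal μ₂ (σ ^ 2)) x).toReal) ^ (φ - 1)
        ∂(gaussianReal μ₁ (σ ^ 2))
      ≤ Real.exp ((φ - 1) * (Δf ^ 2 / (2 * (σ : ℝ) ^ 2)) * φ) := by
  have hσ' : (0 : ℝ) < σ := by exact_mod_cast hσ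
  have hv : σ ^ 2 ≠ 0 := by positivity
  set c : ℝ := (μ₁ - μ₂) / (σ : ℝ) ^ 2 with hc
  set d : ℝ := (μ₂ ^ 2 - μ₁ ^ 2) / (2 * (σ : ℝ) ^ 2) with hd
  have hpow : ∀ᵐ x ∂(gaussianReal μ₁ (σ ^ 2)),
      (((gaussianReal μ₁ (σ ^ 2)).rnDeriv (gaussianReal μ₂ (σ ^ 2)) x).toReal) ^ (φ - 1)
        = Real.exp ((φ - 1) * d) * Real.exp ((φ - 1) * c * x) := by
    filter_upwards [toReal_rnDeriv_gaussianReal_gaussianReal μ₁ μ₂ hv] with x hx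
    rw [hx, ← Real.exp_mul, ← Real.exp_add, NNReal.coe_pow]
    congr 1
    ring
  have hmgf : ∫ x, Real.exp ((φ - 1) * c * x) ∂(gaussianReal μ₁ (σ ^ 2))
      = Real.exp (μ₁ * ((φ - 1) * c) + (σ : ℝ) ^ 2 * ((φ - 1) * c) ^ 2 / 2) := by
    exact congrFun (mgf_id_gaussianReal (μ := μ₁) (v := σ ^ 2)) ((φ - 1) * c)
  have hexp : (φ - 1) * d + (μ₁ * ((φ - 1) * c) + (σ : ℝ) ^ 2 * ((φ - 1) * c) ^ 2 / 2)
      = (φ - 1) * ((μ₁ - μ₂) ^ 2 / (2 * (σ : ℝ) ^ 2)) * φ := by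
    rw [hc, hd]
    field_simp
    ring
  have hsq : (μ₁ - μ₂) ^ 2 ≤ Δf ^ 2 := sq_le_sq' (abs_le.mp hadj).1 (abs_le.mp hadj).2
  have hφ' : 0 ≤ φ - 1 := by linarith
  rw [integral_congr_ae hpow, integral_const_mul, hmgf, ← Real.exp_add, hexp]
  gcongr
end
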